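/- Let ρ = (α,β) be an isolated relation in a gentle quiver 𝚫 with ℤ·ρ ≠ {ρ}, and let 𝚫' be the quiver obtained from 𝚫 by completing ρ (so 𝚫' is gentle). Then, identifying antipaths in 𝚫 with the antipaths in 𝚫' not involving the new arrow γ_ρ: 𝒩_{𝚫'} = 𝒩_𝚫 ∖ {ρ}; the orbit set 𝒩_{𝚫'}/ℤ consists of all orbits 𝒪' ∈ 𝒩_𝚫/ℤ with 𝒪' ≠ ℤ·ρ together with the set (ℤ·ρ) ∖ {ρ}; moreover 𝒞_{𝚫'} = 𝒞_𝚫 ∪ {α, β, γ_ρ} and 𝒞_{𝚫'}/ℤ = 𝒞_𝚫/ℤ ∪ {{α, β, γ_ρ}}. -/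

import Mathlib

/-! Common formalization infrastructure for gentle quivers (Bobinski–Buan,
    "Derived equivalence classification of gentle cluster tilted algebras"). -/

/-- A (finite) quiver with (length-two, monomial) relations.  Vertices and
arrows are natural numbers; `V` and `A` are the finite sets of vertices and
arrows, `src`/`tgt` give the start and terminus of each arrow, and `rel` is the
set of relations, a relation `(a, b)` standing for the length-two path
`a·b` (so `src a = tgt b`). -/
structure QuivRel where
  V : Finset ℕ
  A : Finset ℕ
  src : ℕ → ℕ
  tgt : ℕ → ℕ
  rel : Finset (ℕ × ℕ)

namespace GentleQuiv

/-- Two vertices are adjacent if some arrow joins them (in either direction). -/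
def Adj (Q : QuivRel) (x y : ℕ) : Prop :=
  ∃ a ∈ Q.A, (Q.src a = x ∧ Q.tgt a = y) ∨ (Q.src a = y ∧ Q.tgt a = x)

/-- A quiver is connected if any two of its vertices are joined by a walk. -/
def Connected (Q : QuivRel) : Prop :=
  ∀ x ∈ Q.V, ∀ y ∈ Q.V, Relation.ReflTransGen (Adj Q) x y

/-- `l = [α₁, …, αₙ]` is a (nonempty) path in the quiver: consecutive arrows
compose, i.e. `s αᵢ = t αᵢ₊₁`. -/
def IsPathList (Q : QuivRel) (l : List ℕ) : Prop :=
  l ≠ [] ∧ (∀ a ∈ l, a ∈ Q.A) ∧ l.Chain' (fun a b => Q.src a = Q.tgt b)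

/-- The path `l` contains a subpath (two consecutive arrows) lying in `R`. -/
def HasRelSubpath (Q : QuivRel) (l : List ℕ) : Prop :=
  ∃ a b, (a, b) ∈ Q.rel ∧ [a, b] <:+: l

/-- Gentle quiver: connected, relations are composable pairs of arrows, at most
two arrows in/out of every vertex, the usual gentleness conditions on
relations, and a global bound forcing finite dimensionality. -/
def IsGentle (Q : QuivRel) : Prop :=
  Q.V.Nonempty ∧
  (∀ a ∈ Q.A, Q.src a ∈ Q.V ∧ Q.tgt a ∈ Q.V) ∧
  Connected Q ∧
  (∀ ρ ∈ Q.rel, ρ.1 ∈ Q.A ∧ ρ.2 ∈ Q.A ∧ Q.src ρ.1 = Q.tgt ρ.2) ∧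
  (∀ x, (Q.A.filter fun a => Q.src a = x).card ≤ 2) ∧
  (∀ x, (Q.A.filter fun a => Q.tgt a = x).card ≤ 2) ∧
  (∀ a ∈ Q.A, (Q.A.filter fun b => Q.src b = Q.tgt a ∧ (b, a) ∉ Q.rel).card ≤ 1) ∧
  (∀ a ∈ Q.A, (Q.A.filter fun c => Q.tgt c = Q.src a ∧ (a, c) ∉ Q.rel).card ≤ 1) ∧
  (∀ a ∈ Q.A, (Q.A.filter fun b => (b, a) ∈ Q.rel).card ≤ 1) ∧
  (∀ a ∈ Q.A, (Q.A.filter fun c => (a, c) ∈ Q.rel).card ≤ 1) ∧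
  (∃ n : ℕ, ∀ l : List ℕ, IsPathList Q l → l.length = n → HasRelSubpath Q l)

/-- A choice of functions `σ, τ : Δ₁ → {±1}` as in Avella-Alaminos–Geiss. -/
structure SigmaTau (Q : QuivRel) where
  σ : ℕ → ℤ
  τ : ℕ → ℤ
  σ_pm : ∀ a ∈ Q.A, σ a = 1 ∨ σ a = -1
  τ_pm : ∀ a ∈ Q.A, τ a = 1 ∨ τ a = -1
  σ_src : ∀ a ∈ Q.A, ∀ b ∈ Q.A, a ≠ b → Q.src a = Q.src b → σ a = -σ b
  τ_tgt : ∀ a ∈ Q.A, ∀ b ∈ Q.A, a ≠ b → Q.tgt a = Q.tgt b → τ a = -τ b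
  rel_iff : ∀ a ∈ Q.A, ∀ b ∈ Q.A, Q.src a = Q.tgt b → ((a, b) ∈ Q.rel ↔ σ a = τ b)

/-- A thread: either a trivial path/antipath `1_{x,ε}` at a vertex `x` with a
sign `ε`, or a sequence of arrows of positive length. -/
inductive Thread where
  | triv (x : ℕ) (ε : ℤ) : Thread
  | arrows (l : List ℕ) : Thread
deriving DecidableEq

/-- Source of a thread. -/
def Thread.source (Q : QuivRel) : Thread → ℕ
  | .triv x _ => x
  | .arrows l => Q.src l.getLast!

/-- Target of a thread. -/
def Thread.target (Q : QuivRel) : Thread → ℕ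
  | .triv x _ => x
  | .arrows l => Q.tgt l.head!

/-- `σω` (for paths and antipaths alike; `σ 1_{x,ε} = ε = σ 1'_{x,ε}`). -/
def Thread.sigma {Q : QuivRel} (st : SigmaTau Q) : Thread → ℤ
  | .triv _ ε => ε
  | .arrows l => st.σ l.getLast!

/-- `τω` when `ω` is regarded as a path (`τ 1_{x,ε} = -ε`). -/
def Thread.tauPath {Q : QuivRel} (st : SigmaTau Q) : Thread → ℤ
  | .triv _ ε => -ε
  | .arrows l => st.τ l.head!

/-- `τω` when `ω` is regarded as an antipath (`τ 1'_{x,ε} = ε`). -/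
def Thread.tauAnti {Q : QuivRel} (st : SigmaTau Q) : Thread → ℤ
  | .triv _ ε => ε
  | .arrows l => st.τ l.head!

/-- Length of a thread. -/
def Thread.len : Thread → ℕ
  | .triv _ _ => 0
  | .arrows l => l.length

/-- A path in `𝚫` of positive length (no two consecutive arrows in `R`). -/
def IsPermList (Q : QuivRel) (l : List ℕ) : Prop :=
  IsPathList Q l ∧ l.Chain' (fun a b => (a, b) ∉ Q.rel)

/-- An antipath in `𝚫` of positive length (all consecutive pairs in `R`). -/
def IsAntiList (Q : QuivRel) (l : List ℕ) : Prop :=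
  l ≠ [] ∧ (∀ a ∈ l, a ∈ Q.A) ∧ l.Chain' (fun a b => (a, b) ∈ Q.rel)

/-- A thread is a path in `𝚫` (including trivial ones). -/
def IsPathThread (Q : QuivRel) : Thread → Prop
  | .triv x ε => x ∈ Q.V ∧ (ε = 1 ∨ ε = -1)
  | .arrows l => IsPermList Q l

/-- A thread is an antipath in `𝚫` (including trivial ones). -/
def IsAntiThread (Q : QuivRel) : Thread → Prop
  | .triv x ε => x ∈ Q.V ∧ (ε = 1 ∨ ε = -1)
  | .arrows l => IsAntiList Q l

/-- `w ∈ ℳ`: `w` is a maximal path of `𝚫`. -/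
def InM (Q : QuivRel) (st : SigmaTau Q) (w : Thread) : Prop :=
  IsPathThread Q w ∧
  (¬ ∃ a ∈ Q.A, Q.src a = w.target Q ∧ st.σ a = -(w.tauPath st)) ∧
  (¬ ∃ b ∈ Q.A, Q.tgt b = w.source Q ∧ st.τ b = -(w.sigma st))

/-- `w ∈ 𝒩`: `w` is a maximal antipath of `𝚫`. -/
def InN (Q : QuivRel) (st : SigmaTau Q) (w : Thread) : Prop :=
  IsAntiThread Q w ∧
  (¬ ∃ a ∈ Q.A, Q.src a = w.target Q ∧ st.σ a = w.tauAnti st) ∧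
  (¬ ∃ b ∈ Q.A, Q.tgt b = w.source Q ∧ st.τ b = w.sigma st)

/-- The graph of the bijection `Φ = φ ∘ ψ : 𝒩 → 𝒩`:  `PhiRel Q st w w'` holds
iff `w, w' ∈ 𝒩` and the maximal path `ψ w` (with `s(ψw) = sw`, `σ(ψw) = -σw`)
satisfies `t w' = t (ψ w)` and `τ w' = -τ(ψ w)`, i.e. `w' = φ (ψ w) = Φ w`. -/
def PhiRel (Q : QuivRel) (st : SigmaTau Q) (w w' : Thread) : Prop :=
  InN Q st w ∧ InN Q st w' ∧
  ∃ m : Thread, InM Q st m ∧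
    m.source Q = w.source Q ∧ m.sigma st = -(w.sigma st) ∧
    w'.target Q = m.target Q ∧ w'.tauAnti st = -(m.tauPath st)

/-- `O` is an orbit of the `ℤ`-action on `𝒩` induced by `Φ`. -/
def NOrbit (Q : QuivRel) (st : SigmaTau Q) (O : Set Thread) : Prop :=
  ∃ w, InN Q st w ∧ O = {w' | Relation.EqvGen (PhiRel Q st) w w'}

/-- `p(𝒪) = |𝒪|` for an orbit `𝒪 ∈ 𝒩/ℤ`. -/
noncomputable def pN (O : Set Thread) : ℕ := O.ncard

/-- `q(𝒪) = Σ_{ω ∈ 𝒪} ℓ(ω)` for an orbit `𝒪 ∈ 𝒩/ℤ`. -/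
noncomputable def qN (O : Set Thread) : ℕ := ∑ᶠ w ∈ O, Thread.len w

/-- `a ∈ 𝒞`: the arrow `a` occurs in no maximal antipath. -/
def InC (Q : QuivRel) (st : SigmaTau Q) (a : ℕ) : Prop :=
  a ∈ Q.A ∧ ¬ ∃ l : List ℕ, InN Q st (.arrows l) ∧ a ∈ l

/-- The graph of the bijection `Ψ : 𝒞 → 𝒞`. -/
def PsiRel (Q : QuivRel) (st : SigmaTau Q) (a b : ℕ) : Prop :=
  InC Q st a ∧ InC Q st b ∧ Q.tgt b = Q.src a ∧ st.τ b = st.σ a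

/-- `O` is an orbit of the `ℤ`-action on `𝒞` induced by `Ψ`. -/
def COrbit (Q : QuivRel) (st : SigmaTau Q) (O : Set ℕ) : Prop :=
  ∃ a, InC Q st a ∧ O = {b | Relation.EqvGen (PsiRel Q st) a b}

/-- The Avella-Alaminos–Geiss invariant `f_𝚫 : ℕ² → ℕ`:  `f_𝚫 (p,q)` counts the
orbits `𝒪 ∈ 𝒩/ℤ ⊔ 𝒞/ℤ` with `p(𝒪) = p` and `q(𝒪) = q`. -/
noncomputable def fInv (Q : QuivRel) (st : SigmaTau Q) : ℕ × ℕ → ℕ := fun pq =>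
  {O : Set Thread | NOrbit Q st O ∧ pN O = pq.1 ∧ qN O = pq.2}.ncard +
  {O : Set ℕ | COrbit Q st O ∧ pq.1 = 0 ∧ O.ncard = pq.2}.ncard

/-- `[p, q] : ℕ² → ℕ`, the characteristic function of `{(p, q)}`. -/
def charFn (p q : ℕ) : ℕ × ℕ → ℕ := fun pq => if pq = (p, q) then 1 else 0

/-- Tree type: `|Δ₀| = |Δ₁| + 1`. -/
def TreeType (Q : QuivRel) : Prop := Q.V.card = Q.A.card + 1

/-- Removing a set of arrows (keeping all vertices); relations containing a
removed arrow are discarded. -/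
def deleteArrows (Q : QuivRel) (S : Finset ℕ) : QuivRel where
  V := Q.V
  A := Q.A \ S
  src := Q.src
  tgt := Q.tgt
  rel := Q.rel.filter fun ρ => ρ.1 ∉ S ∧ ρ.2 ∉ S

/-- Branch arrow: removing it disconnects the quiver. -/
def BranchArrow (Q : QuivRel) (a : ℕ) : Prop :=
  a ∈ Q.A ∧ ¬ Connected (deleteArrows Q {a})

/-- Cycle arrow: removing it leaves the quiver connected. -/
def CycleArrow (Q : QuivRel) (a : ℕ) : Prop :=
  a ∈ Q.A ∧ Connected (deleteArrows Q {a})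

/-- Branch relation: a relation one of whose arrows is a branch arrow. -/
def BranchRel (Q : QuivRel) (ρ : ℕ × ℕ) : Prop :=
  ρ ∈ Q.rel ∧ (BranchArrow Q ρ.1 ∨ BranchArrow Q ρ.2)

/-- A relation `ρ = (α, β)` is isolated if the antipath `(α, β)` is a maximal
antipath, i.e. `ρ ∈ 𝒩`. -/
def Isolated (Q : QuivRel) (st : SigmaTau Q) (ρ : ℕ × ℕ) : Prop :=
  ρ ∈ Q.rel ∧ InN Q st (.arrows [ρ.1, ρ.2])

/-- `Q'` is obtained from `Q` by completing the relations from `R₀`, the new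
arrow attached to `ρ ∈ R₀` being `γ ρ`. -/
structure IsCompletion (Q : QuivRel) (R0 : Finset (ℕ × ℕ)) (γ : ℕ × ℕ → ℕ)
    (Q' : QuivRel) : Prop where
  subset : R0 ⊆ Q.rel
  fresh : ∀ ρ ∈ R0, γ ρ ∉ Q.A
  inj : ∀ ρ ∈ R0, ∀ ρ' ∈ R0, γ ρ = γ ρ' → ρ = ρ'
  V_eq : Q'.V = Q.V
  A_eq : Q'.A = Q.A ∪ R0.image γ
  src_old : ∀ a ∈ Q.A, Q'.src a = Q.src a
  tgt_old : ∀ a ∈ Q.A, Q'.tgt a = Q.tgt a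
  src_new : ∀ ρ ∈ R0, Q'.src (γ ρ) = Q.tgt ρ.1
  tgt_new : ∀ ρ ∈ R0, Q'.tgt (γ ρ) = Q.src ρ.2
  rel_eq : Q'.rel = Q.rel ∪ R0.image (fun ρ => (γ ρ, ρ.1)) ∪
      R0.image (fun ρ => (ρ.2, γ ρ))

/-- A 3-cycle: three pairwise distinct arrows forming an oriented cycle. -/
def Is3Cycle (Q : QuivRel) (a0 a1 a2 : ℕ) : Prop :=
  a0 ∈ Q.A ∧ a1 ∈ Q.A ∧ a2 ∈ Q.A ∧ a0 ≠ a1 ∧ a1 ≠ a2 ∧ a0 ≠ a2 ∧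
  Q.src a0 = Q.tgt a1 ∧ Q.src a1 = Q.tgt a2 ∧ Q.src a2 = Q.tgt a0

/-- A triangle: a 3-cycle all of whose three compositions are relations. -/
def IsTriangleTriple (Q : QuivRel) (a0 a1 a2 : ℕ) : Prop :=
  Is3Cycle Q a0 a1 a2 ∧ (a0, a1) ∈ Q.rel ∧ (a1, a2) ∈ Q.rel ∧ (a2, a0) ∈ Q.rel

/-- The (unordered) set of arrows of a triangle. -/
def TriangleSet (Q : QuivRel) (O : Finset ℕ) : Prop :=
  ∃ a0 a1 a2, O = {a0, a1, a2} ∧ IsTriangleTriple Q a0 a1 a2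

/-- Branch triangle: removing any two of its arrows disconnects the quiver. -/
def BranchTriangle (Q : QuivRel) (O : Finset ℕ) : Prop :=
  TriangleSet Q O ∧ ∀ S ⊆ O, S.card = 2 → ¬ Connected (deleteArrows Q S)

/-- Free relation: a relation neither of whose arrows lies in `𝒞`. -/
def FreeRel (Q : QuivRel) (st : SigmaTau Q) (ρ : ℕ × ℕ) : Prop :=
  ρ ∈ Q.rel ∧ ¬ InC Q st ρ.1 ∧ ¬ InC Q st ρ.2

/-- The class `𝒜`: gentle quivers with `f_𝚫 = m·[0,3] + [p+m+2, p]`. -/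
def ClassA (Q : QuivRel) (st : SigmaTau Q) : Prop :=
  IsGentle Q ∧ ∃ m p : ℕ, ∀ x, fInv Q st x = m * charFn 0 3 x + charFn (p + m + 2) p x

/-- The class `Ã`: gentle quivers with
`f_𝚫 = (m₁+m₂)·[0,3] + [p+m₁, p] + [q+m₂, q]`, `p+m₁ > 0`, `q+m₂ > 0`. -/
def ClassAtilde (Q : QuivRel) (st : SigmaTau Q) : Prop :=
  IsGentle Q ∧ ∃ m1 m2 p q : ℕ, 0 < p + m1 ∧ 0 < q + m2 ∧
    ∀ x, fInv Q st x =
      (m1 + m2) * charFn 0 3 x + charFn (p + m1) p x + charFn (q + m2) q x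

/-- Isomorphism of quivers with relations. -/
def IsoQR (Q Q' : QuivRel) : Prop :=
  ∃ fV fA : ℕ → ℕ,
    Set.BijOn fV ↑Q.V ↑Q'.V ∧ Set.BijOn fA ↑Q.A ↑Q'.A ∧
    (∀ a ∈ Q.A, Q'.src (fA a) = fV (Q.src a) ∧ Q'.tgt (fA a) = fV (Q.tgt a)) ∧
    (∀ a ∈ Q.A, ∀ b ∈ Q.A, ((a, b) ∈ Q.rel ↔ (fA a, fA b) ∈ Q'.rel))

/-- The quiver has no loops. -/
def NoLoops (Q : QuivRel) : Prop := ∀ a ∈ Q.A, Q.src a ≠ Q.tgt a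

/-- The reflection at `x` is defined: every arrow starting at `x` admits a
(necessarily unique) companion arrow ending at `x` not bound by a relation. -/
def CanReflect (Q : QuivRel) (x : ℕ) : Prop :=
  x ∈ Q.V ∧ ∀ a ∈ Q.A, Q.src a = x → ∃ b ∈ Q.A, Q.tgt b = x ∧ (a, b) ∉ Q.rel

/-- `Q'` is the reflection of the gentle loop-free quiver `Q` at the vertex
`x`, following Brenner–Butler tilting. -/
def IsReflection (Q : QuivRel) (x : ℕ) (Q' : QuivRel) : Prop :=
  IsGentle Q ∧ NoLoops Q ∧ CanReflect Q x ∧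
  Q'.V = Q.V ∧ Q'.A = Q.A ∧
  (∀ a ∈ Q.A, Q.tgt a = x → Q'.src a = x ∧ Q'.tgt a = Q.src a) ∧
  (∀ a ∈ Q.A, Q.src a = x →
    ∀ b ∈ Q.A, Q.tgt b = x → (a, b) ∉ Q.rel → Q'.src a = Q.src b) ∧
  (∀ a ∈ Q.A, Q.tgt a ≠ x → Q.src a ≠ x → Q'.src a = Q.src a) ∧
  (∀ a ∈ Q.A, Q.tgt a ≠ x →
    ((∃ b ∈ Q.A, Q.tgt b = x ∧ Q.src b = Q.tgt a ∧ (b, a) ∈ Q.rel) → Q'.tgt a = x) ∧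
    ((¬ ∃ b ∈ Q.A, Q.tgt b = x ∧ Q.src b = Q.tgt a ∧ (b, a) ∈ Q.rel) →
      Q'.tgt a = Q.tgt a)) ∧
  (∀ a b : ℕ, (a, b) ∈ Q'.rel ↔
    (((a, b) ∈ Q.rel ∧ Q.tgt a ≠ x ∧ Q.src a ≠ x) ∨
     (a ∈ Q.A ∧ b ∈ Q.A ∧ Q.src a = x ∧ Q.tgt b = x ∧ (a, b) ∉ Q.rel) ∨
     (a ∈ Q.A ∧ b ∈ Q.A ∧ Q.tgt a = x ∧
       ∃ c ∈ Q.A, c ≠ a ∧ Q.tgt c = x ∧ Q.src c = Q.tgt b ∧ (c, b) ∈ Q.rel)))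

/-- The opposite quiver with relations. -/
def opQR (Q : QuivRel) : QuivRel where
  V := Q.V
  A := Q.A
  src := Q.tgt
  tgt := Q.src
  rel := Q.rel.image fun ρ => (ρ.2, ρ.1)

/-- Coreflection: the dual of reflection. -/
def IsCoreflection (Q : QuivRel) (x : ℕ) (Q' : QuivRel) : Prop :=
  IsReflection (opQR Q) x (opQR Q')

/-- One step of reflection equivalence: a reflection, a coreflection, or an
isomorphism of quivers with relations. -/
def RefStep (Q Q' : QuivRel) : Prop :=
  (∃ x, IsReflection Q x Q') ∨ (∃ x, IsCoreflection Q x Q') ∨ IsoQR Q Q'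

/-- Reflection equivalence: a finite sequence of reflections/coreflections,
up to isomorphism of quivers with relations. -/
def RefEquiv : QuivRel → QuivRel → Prop := Relation.ReflTransGen RefStep

/-- A cyclic orientation of a `1`-cycle quiver without branch arrows (i.e. a
cycle): enumerations of the vertices and arrows by `ZMod n` such that the
`i`-th arrow joins the `i`-th and `(i+1)`-st vertices. -/
structure CyclicOrientation (Q : QuivRel) (n : ℕ) where
  ev : ZMod n → ℕ
  ea : ZMod n → ℕ
  ev_mem : ∀ i, ev i ∈ Q.V
  ea_mem : ∀ i, ea i ∈ Q.A
  ev_inj : Function.Injective ev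
  ea_inj : Function.Injective ea
  ev_surj : ∀ v ∈ Q.V, ∃ i, ev i = v
  ea_surj : ∀ a ∈ Q.A, ∃ i, ea i = a
  compat : ∀ i : ZMod n,
    (Q.src (ea i) = ev i ∧ Q.tgt (ea i) = ev (i + 1)) ∨
    (Q.src (ea i) = ev (i + 1) ∧ Q.tgt (ea i) = ev i)

/-- Clockwise arrow with respect to a cyclic orientation. -/
def Clockwise (Q : QuivRel) {n : ℕ} (co : CyclicOrientation Q n) (a : ℕ) : Prop :=
  a ∈ Q.A ∧ ∃ i : ZMod n, co.ea i = a ∧ Q.src a = co.ev i ∧ Q.tgt a = co.ev (i + 1)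

/-- Anticlockwise arrow with respect to a cyclic orientation. -/
def Anticlockwise (Q : QuivRel) {n : ℕ} (co : CyclicOrientation Q n) (a : ℕ) : Prop :=
  a ∈ Q.A ∧ ∃ i : ZMod n, co.ea i = a ∧ Q.src a = co.ev (i + 1) ∧ Q.tgt a = co.ev i

end GentleQuiv

namespace GentleQuiv

/-!
Pairs (vertex, sign) serve as endpoints of antipaths and paths, which become the walks of two graphs
on these pairs with arrow set `Δ₁`. Distinct arrows have distinct tails and distinct heads in either
graph, so a maximal walk is determined by each of its ends, and `Φ` traverses maximal paths from one
maximal antipath to the next.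

The signs of `γ_ρ` are forced by the new relations. In the graph of antipaths `γ_ρ` closes `ρ` to a
cycle and touches no other maximal walk: `ρ` drops out of `𝒩`, and the arrows of the cycle form a
new `Ψ`-orbit. In the graph of paths `γ_ρ` joins the maximal path ending opposite to the end of `ρ`
to the one starting opposite to the start of `ρ`: the predecessor of `ρ` under `Φ` is now sent to
its successor, that is, `ρ` is cut out of its `Φ`-orbit, which does not vanish as it is not `{ρ}`.
-/

/-! ### Orbits -/

section Orbits

variable {X : Type*} {r r' : X → X → Prop} {N S T : Set X} {p x y : X}

/-- The orbit of `x` under the `ℤ`-action of which `r` is the graph of the generator: the class of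
`x` in the equivalence relation generated by `r`. -/
def orbit (r : X → X → Prop) (x : X) : Set X :=
  {y | Relation.EqvGen r x y}

/-- The orbit set `N/ℤ` of the action generated by `r`. -/
def orbits (N : Set X) (r : X → X → Prop) : Set (Set X) :=
  {O | ∃ x ∈ N, O = orbit r x}

/-- The graph of the first-return map to the complement of `p`: the point `p` is cut out of its
orbit and its predecessor is sent to its successor. -/
def bypass (r : X → X → Prop) (p x y : X) : Prop :=
  x ≠ p ∧ y ≠ p ∧ (r x y ∨ r x p ∧ r p y)

theorem eqvGen_mem_iff (hS : ∀ x y, r x y → (x ∈ S ↔ y ∈ S)) (h : Relation.EqvGen r x y) :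
    x ∈ S ↔ y ∈ S := by
  induction h with
  | rel x y h => exact hS x y h
  | refl x => rfl
  | symm x y _ ih => exact ih.symm
  | trans x y z _ _ ih₁ ih₂ => exact ih₁.trans ih₂

theorem eqvGen_lift {Y : Type*} {s : Y → Y → Prop} (f : X → Y)
    (hf : ∀ x y, r x y → Relation.EqvGen s (f x) (f y)) (h : Relation.EqvGen r x y) :
    Relation.EqvGen s (f x) (f y) := by
  induction h with
  | rel x y h => exact hf x y h
  | refl x => exact .refl _
  | symm x y _ ih => exact ih.symm
  | trans x y z _ _ ih₁ ih₂ => exact ih₁.trans _ _ _ ih₂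

theorem mem_orbit_self (r : X → X → Prop) (x : X) : x ∈ orbit r x :=
  .refl x

theorem orbit_eq_orbit_iff : orbit r x = orbit r y ↔ y ∈ orbit r x :=
  ⟨fun h => h ▸ mem_orbit_self r y, fun h => Set.ext fun _ =>
    ⟨h.symm.trans _ _ _, Relation.EqvGen.trans _ _ _ h⟩⟩

theorem orbit_subset (hS : ∀ x y, r x y → (x ∈ S ↔ y ∈ S)) (hx : x ∈ S) : orbit r x ⊆ S :=
  fun _ h => (eqvGen_mem_iff hS h).mp hx

theorem bypass.eqvGen (h : bypass r p x y) : Relation.EqvGen r x y := by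
  obtain ⟨-, -, h | ⟨hxp, hpy⟩⟩ := h
  · exact .rel _ _ h
  · exact .trans _ _ _ (.rel _ _ hxp) (.rel _ _ hpy)

theorem exists_bypass_neighbour (hr : Relator.BiUnique r) (p : X) :
    ∃ q, ∀ u ≠ p, r u p ∨ r p u → Relation.EqvGen (bypass r p) q u := by
  by_cases hpred : ∃ q ≠ p, r q p
  · obtain ⟨q, hq, hqp⟩ := hpred
    refine ⟨q, fun u hu h => h.elim (fun hup => ?_) fun hpu => .rel _ _ ⟨hq, hu, .inr ⟨hqp, hpu⟩⟩⟩
    exact hr.1 hqp hup ▸ .refl q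
  by_cases hsucc : ∃ q ≠ p, r p q
  · obtain ⟨q, -, hpq⟩ := hsucc
    refine ⟨q, fun u hu h => h.elim (fun hup => (hpred ⟨u, hu, hup⟩).elim) fun hpu => ?_⟩
    exact hr.2 hpq hpu ▸ .refl q
  · exact ⟨p, fun u hu h => (h.elim (fun hup => hpred ⟨u, hu, hup⟩)
      fun hpu => hsucc ⟨u, hu, hpu⟩).elim⟩

theorem eqvGen_bypass_iff (hr : Relator.BiUnique r) (hx : x ≠ p) (hy : y ≠ p) :
    Relation.EqvGen (bypass r p) x y ↔ Relation.EqvGen r x y := by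
  classical
  refine ⟨eqvGen_lift id fun _ _ => bypass.eqvGen, fun h => ?_⟩
  obtain ⟨q, hq⟩ := exists_bypass_neighbour hr p
  -- Collapsing `p` onto the neighbour `q` turns every `r`-step into a `bypass`-connection.
  have collapse := eqvGen_lift (s := bypass r p) (fun z => if z = p then q else z)
    (fun u v huv => ?_) h
  · simpa only [if_neg hx, if_neg hy] using collapse
  by_cases hu : u = p <;> by_cases hv : v = p
  · simpa only [if_pos hu, if_pos hv] using .refl q
  · simpa only [if_pos hu, if_neg hv] using hq v hv (.inr (hu ▸ huv))
  · simpa only [if_neg hu, if_pos hv] using (hq u hu (.inl (hv ▸ huv))).symm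
  · simpa only [if_neg hu, if_neg hv] using .rel _ _ ⟨hu, hv, .inl huv⟩

theorem orbit_bypass (hr : Relator.BiUnique r) (hx : x ≠ p) :
    orbit (bypass r p) x = orbit r x \ {p} := by
  have hne : orbit (bypass r p) x ⊆ {p}ᶜ :=
    orbit_subset (fun _ _ h => ⟨fun _ => h.2.1, fun _ => h.1⟩) hx
  ext y
  exact ⟨fun h => ⟨(eqvGen_bypass_iff hr hx (hne h)).mp h, hne h⟩,
    fun h => (eqvGen_bypass_iff hr hx h.2).mpr h.1⟩

theorem orbits_bypass (hr : Relator.BiUnique r) (hrN : ∀ x y, r x y → x ∈ N ∧ y ∈ N) (hp : p ∈ N)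
    (hfix : orbit r p ≠ {p}) :
    orbits (N \ {p}) (bypass r p) =
      {O | O ∈ orbits N r ∧ O ≠ orbit r p} ∪ {orbit r p \ {p}} := by
  ext O
  constructor
  · rintro ⟨x, ⟨hxN, hxp⟩, rfl⟩
    rw [orbit_bypass hr hxp]
    by_cases hpx : p ∈ orbit r x
    · exact .inr (by rw [orbit_eq_orbit_iff.mpr hpx, Set.mem_singleton_iff])
    · rw [Set.sdiff_singleton_eq_self hpx]
      exact .inl ⟨⟨x, hxN, rfl⟩, fun h => hpx (orbit_eq_orbit_iff.mp h)⟩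
  · rintro (⟨⟨x, hxN, rfl⟩, hO⟩ | rfl)
    · have hxp : x ≠ p := fun h => hO (h ▸ rfl)
      have hpx : p ∉ orbit r x := fun h => hO (orbit_eq_orbit_iff.mpr h)
      exact ⟨x, ⟨hxN, hxp⟩, by rw [orbit_bypass hr hxp, Set.sdiff_singleton_eq_self hpx]⟩
    · obtain ⟨x, hx, hxp⟩ : ∃ x ∈ orbit r p, x ≠ p := by
        by_contra! h
        exact hfix (Set.eq_singleton_iff_unique_mem.mpr ⟨mem_orbit_self r p, h⟩)
      have hxN : x ∈ N := orbit_subset (fun u v h => iff_of_true (hrN u v h).1 (hrN u v h).2) hp hx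
      exact ⟨x, ⟨hxN, hxp⟩, by rw [orbit_bypass hr hxp, orbit_eq_orbit_iff.mpr hx]⟩

theorem orbit_eq_of_restrict (hT : ∀ x y, r' x y → (x ∈ T ↔ y ∈ T))
    (hr : ∀ x y, r x y ↔ x ∉ T ∧ y ∉ T ∧ r' x y) (hx : x ∉ T) : orbit r' x = orbit r x := by
  refine subset_antisymm (fun y (h : Relation.EqvGen r' x y) => ?_)
    fun y => eqvGen_lift id fun u v h => .rel u v ((hr u v).mp h).2.2
  change Relation.EqvGen r x y
  induction h with
  | rel u v h => exact .rel u v ((hr u v).mpr ⟨hx, (hT u v h).not.mp hx, h⟩)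
  | refl u => exact .refl u
  | symm u v h ih => exact (ih ((eqvGen_mem_iff hT h).not.mpr hx)).symm
  | trans u v w h _ ih₁ ih₂ => exact (ih₁ hx).trans _ _ _ (ih₂ ((eqvGen_mem_iff hT h).not.mp hx))

theorem orbits_union (hN : Disjoint N T) (hT : ∀ x y, r' x y → (x ∈ T ↔ y ∈ T))
    (hr : ∀ x y, r x y ↔ x ∉ T ∧ y ∉ T ∧ r' x y) (hne : T.Nonempty)
    (hconn : ∀ x ∈ T, ∀ y ∈ T, Relation.EqvGen r' x y) :
    orbits (N ∪ T) r' = orbits N r ∪ {T} := by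
  have orbit_eq {x} (hx : x ∈ N) : orbit r' x = orbit r x :=
    orbit_eq_of_restrict hT hr (Set.disjoint_left.mp hN hx)
  have orbit_eq_T {x} (hx : x ∈ T) : orbit r' x = T :=
    subset_antisymm (orbit_subset hT hx) (hconn x hx)
  ext O
  constructor
  · rintro ⟨x, hx | hx, rfl⟩
    · exact .inl ⟨x, hx, orbit_eq hx⟩
    · exact .inr (orbit_eq_T hx)
  · rintro (⟨x, hx, rfl⟩ | rfl)
    · exact ⟨x, .inl hx, (orbit_eq hx).symm⟩
    · obtain ⟨x, hx⟩ := hne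
      exact ⟨x, .inr hx, (orbit_eq_T hx).symm⟩

end Orbits

/-! ### Walks in graphs with at most one arrow into and out of each node -/

/-- A directed multigraph with edge set `arrows`, the arrow `a` leading from `tail a` to `head a`.
Values of `tail` and `head` outside `arrows` are irrelevant. -/
structure ArrowGraph (α X : Type*) where
  arrows : Set α
  tail : α → X
  head : α → X

namespace ArrowGraph

variable {α X : Type*} {G G' : ArrowGraph α X} {S T S' T' : X} {l l' : List α} {a b g : α}

/-- `G.IsWalk S l T`: the list `l` is a walk from `S` to `T`. As in the composition of arrows of a
quiver, the last element of `l` is traversed first. -/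
def IsWalk (G : ArrowGraph α X) (S : X) : List α → X → Prop
  | [], T => S = T
  | a :: l, T => a ∈ G.arrows ∧ G.head a = T ∧ G.IsWalk S l (G.tail a)

/-- A node at which no arrow ends. -/
def IsSource (G : ArrowGraph α X) (S : X) : Prop :=
  ∀ a ∈ G.arrows, G.head a ≠ S

/-- A node at which no arrow starts. -/
def IsSink (G : ArrowGraph α X) (T : X) : Prop :=
  ∀ a ∈ G.arrows, G.tail a ≠ T

/-- A walk which can be prolonged in neither direction. -/
structure IsMaxWalk (G : ArrowGraph α X) (S : X) (l : List α) (T : X) : Prop where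
  isWalk : G.IsWalk S l T
  isSource : G.IsSource S
  isSink : G.IsSink T

/-- Two nodes are linked if a maximal walk leads from the first to the second. -/
def Linked (G : ArrowGraph α X) (S T : X) : Prop :=
  ∃ l, G.IsMaxWalk S l T

/-- The arrows lying on no maximal walk. In a finite thin graph they are those on directed cycles,
which is how the set `𝒞` arises. -/
def cyclicArrows (G : ArrowGraph α X) : Set α :=
  {a | a ∈ G.arrows ∧ ∀ S l T, G.IsMaxWalk S l T → a ∉ l}

/-- A graph is thin if every node has at most one outgoing and at most one incoming arrow. -/
structure IsThin (G : ArrowGraph α X) : Prop where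
  tail_injOn : Set.InjOn G.tail G.arrows
  head_injOn : Set.InjOn G.head G.arrows

/-- The opposite graph, used to transport statements along the duality of tails and heads. -/
def op (G : ArrowGraph α X) : ArrowGraph α X :=
  ⟨G.arrows, G.head, G.tail⟩

theorem isWalk_append :
    G.IsWalk S (l ++ l') T ↔ ∃ U, G.IsWalk S l' U ∧ G.IsWalk U l T := by
  induction l generalizing T with
  | nil => simp [IsWalk]
  | cons a l ih => grind [IsWalk]

theorem isWalk_op : G.op.IsWalk T l.reverse S ↔ G.IsWalk S l T := by
  induction l generalizing T with
  | nil => simp [IsWalk, eq_comm]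
  | cons a l ih =>
    rw [List.reverse_cons, isWalk_append]
    constructor
    · rintro ⟨_, ⟨ha, rfl, rfl⟩, h⟩
      exact ⟨ha, rfl, ih.mp h⟩
    · rintro ⟨ha, rfl, h⟩
      exact ⟨_, ⟨ha, rfl, rfl⟩, ih.mpr h⟩

theorem IsWalk.mem_arrows (h : G.IsWalk S l T) (ha : a ∈ l) : a ∈ G.arrows := by
  induction l generalizing T with
  | nil => simp at ha
  | cons b l ih => exact (List.mem_cons.mp ha).elim (fun hab => hab ▸ h.1) (ih h.2.2)

theorem IsWalk.tail_getLast (h : G.IsWalk S l T) (hl : l ≠ []) : G.tail (l.getLast hl) = S := by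
  induction l generalizing T with
  | nil => contradiction
  | cons a l ih =>
    cases l with
    | nil => exact h.2.2.symm
    | cons b l => exact ih h.2.2 (List.cons_ne_nil b l)

theorem exists_isWalk_iff [Nonempty X] : (∃ S T, G.IsWalk S l T) ↔
    (∀ a ∈ l, a ∈ G.arrows) ∧ l.IsChain (fun a b => G.tail a = G.head b) := by
  induction l with
  | nil => simp [IsWalk]
  | cons a l ih =>
    cases l with
    | nil => simp [IsWalk]
    | cons b l =>
      rw [List.forall_mem_cons, List.isChain_cons_cons]
      constructor
      · rintro ⟨S, T, ha, -, h⟩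
        obtain ⟨hA, hchain⟩ := ih.mp ⟨S, _, h⟩
        exact ⟨⟨ha, hA⟩, h.2.1.symm, hchain⟩
      · rintro ⟨⟨ha, hA⟩, hab, hchain⟩
        obtain ⟨S, T, h⟩ := ih.mpr ⟨hA, hchain⟩
        exact ⟨S, G.head a, ha, rfl, h.1, hab.symm, h.2.2⟩

theorem IsWalk.exists_isWalk_tail (h : G.IsWalk S l T) (ha : a ∈ l) :
    ∃ l₀, G.IsWalk S l₀ (G.tail a) := by
  obtain ⟨l₁, l₂, rfl⟩ := List.append_of_mem ha
  obtain ⟨U, hU, -⟩ := isWalk_append.mp h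
  exact ⟨l₂, hU.2.2⟩

theorem IsMaxWalk.op (h : G.IsMaxWalk S l T) : G.op.IsMaxWalk T l.reverse S :=
  ⟨isWalk_op.mpr h.isWalk, h.isSink, h.isSource⟩

theorem IsThin.op (h : G.IsThin) : G.op.IsThin :=
  ⟨h.head_injOn, h.tail_injOn⟩

theorem IsThin.eq_of_isWalk_to (hG : G.IsThin) (hS : G.IsSource S) (hS' : G.IsSource S')
    (h : G.IsWalk S l T) (h' : G.IsWalk S' l' T) : S = S' ∧ l = l' := by
  induction l generalizing l' T with
  | nil =>
    cases l' with
    | nil => exact ⟨h.trans h'.symm, rfl⟩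
    | cons b l' => exact (hS b h'.1 (h'.2.1.trans h.symm)).elim
  | cons a l ih =>
    cases l' with
    | nil => exact (hS' a h.1 (h.2.1.trans h'.symm)).elim
    | cons b l' =>
      obtain rfl := hG.head_injOn h.1 h'.1 (h.2.1.trans h'.2.1.symm)
      obtain ⟨hSS', rfl⟩ := ih h.2.2 h'.2.2
      exact ⟨hSS', rfl⟩

theorem IsThin.source_unique (hG : G.IsThin) (h : G.IsMaxWalk S l T) (h' : G.IsMaxWalk S' l' T) :
    S = S' :=
  (hG.eq_of_isWalk_to h.isSource h'.isSource h.isWalk h'.isWalk).1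

theorem IsThin.sink_unique (hG : G.IsThin) (h : G.IsMaxWalk S l T) (h' : G.IsMaxWalk S l' T') :
    T = T' :=
  hG.op.source_unique h.op h'.op

theorem IsThin.source_unique_of_mem (hG : G.IsThin) (h : G.IsMaxWalk S l T)
    (h' : G.IsMaxWalk S' l' T') (ha : a ∈ l) (ha' : a ∈ l') : S = S' := by
  obtain ⟨l₀, h₀⟩ := h.isWalk.exists_isWalk_tail ha
  obtain ⟨l₁, h₁⟩ := h'.isWalk.exists_isWalk_tail ha'
  exact (hG.eq_of_isWalk_to h.isSource h'.isSource h₀ h₁).1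

theorem IsWalk.exists_head_eq_tail (h : G.IsWalk S l S) (ha : a ∈ l) :
    ∃ c ∈ l, G.head c = G.tail a := by
  obtain ⟨l₁, l₂, rfl⟩ := List.append_of_mem ha
  obtain ⟨U, ⟨-, haU, h₂⟩, h₁⟩ := isWalk_append.mp h
  match l₂, l₁ with
  | c :: l₂, l₁ => exact ⟨c, by simp, h₂.2.1⟩
  | [], [] => exact ⟨a, by simp, haU.trans (h₁.trans h₂)⟩
  | [], c :: l₁ => exact ⟨c, by simp, h₁.2.1.trans h₂⟩

theorem IsThin.mem_closed_walk_iff (hG : G.IsThin) (h : G.IsWalk S l S) (ha : a ∈ G.arrows)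
    (hb : b ∈ G.arrows) (hab : G.head b = G.tail a) : a ∈ l ↔ b ∈ l := by
  constructor
  · intro hal
    obtain ⟨c, hc, hca⟩ := h.exists_head_eq_tail hal
    exact hG.head_injOn (h.mem_arrows hc) hb (hca.trans hab.symm) ▸ hc
  · intro hbl
    obtain ⟨c, hc, hcb⟩ := (isWalk_op.mpr h).exists_head_eq_tail (List.mem_reverse.mpr hbl)
    rw [List.mem_reverse] at hc
    exact hG.tail_injOn (h.mem_arrows hc) ha (hcb.trans hab) ▸ hc

theorem IsWalk.eqvGen_head {r : α → α → Prop} (h : G.IsWalk S (a :: l) T)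
    (hr : ∀ b ∈ a :: l, ∀ c ∈ a :: l, G.head c = G.tail b → r b c) (hb : b ∈ a :: l) :
    Relation.EqvGen r a b := by
  induction l generalizing a T with
  | nil => exact List.mem_singleton.mp hb ▸ .refl b
  | cons c l ih =>
    obtain rfl | hb := List.mem_cons.mp hb
    · exact .refl b
    · have hac : r a c := hr a List.mem_cons_self c (.tail _ List.mem_cons_self) h.2.2.2.1
      exact .trans _ c _ (.rel _ _ hac)
        (ih h.2.2 (fun b hb c hc => hr b (.tail _ hb) c (.tail _ hc)) hb)

theorem IsWalk.eqvGen {r : α → α → Prop} (h : G.IsWalk S l T)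
    (hr : ∀ a ∈ l, ∀ b ∈ l, G.head b = G.tail a → r a b) (ha : a ∈ l) (hb : b ∈ l) :
    Relation.EqvGen r a b := by
  cases l with
  | nil => simp at ha
  | cons c l => exact (h.eqvGen_head hr ha).symm.trans _ _ _ (h.eqvGen_head hr hb)

/-- `G'` is the graph `G` with one new arrow `g`. -/
structure IsExtension (G G' : ArrowGraph α X) (g : α) : Prop where
  fresh : g ∉ G.arrows
  arrows_eq : G'.arrows = insert g G.arrows
  tail_eq : Set.EqOn G'.tail G.tail G.arrows
  head_eq : Set.EqOn G'.head G.head G.arrows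

namespace IsExtension

theorem op (hE : IsExtension G G' g) : IsExtension G.op G'.op g :=
  ⟨hE.fresh, hE.arrows_eq, hE.head_eq, hE.tail_eq⟩

theorem mem_new (hE : IsExtension G G' g) : g ∈ G'.arrows :=
  hE.arrows_eq ▸ Set.mem_insert g _

theorem mem_of_mem (hE : IsExtension G G' g) (ha : a ∈ G.arrows) : a ∈ G'.arrows :=
  hE.arrows_eq ▸ Set.mem_insert_of_mem g ha

theorem isSource_iff (hE : IsExtension G G' g) :
    G'.IsSource S ↔ S ≠ G'.head g ∧ G.IsSource S := by
  simp only [IsSource, hE.arrows_eq, Set.forall_mem_insert, ne_comm]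
  exact and_congr_right' (forall₂_congr fun a ha => by rw [hE.head_eq ha])

theorem isSink_iff (hE : IsExtension G G' g) :
    G'.IsSink T ↔ T ≠ G'.tail g ∧ G.IsSink T :=
  hE.op.isSource_iff

theorem isWalk_iff (hE : IsExtension G G' g) (hg : g ∉ l) :
    G'.IsWalk S l T ↔ G.IsWalk S l T := by
  induction l generalizing T with
  | nil => rfl
  | cons a l ih =>
    obtain ⟨hga, hgl⟩ := not_or.mp (List.mem_cons.not.mp hg)
    have ha : a ∈ G'.arrows ↔ a ∈ G.arrows := by
      rw [hE.arrows_eq, Set.mem_insert_iff, or_iff_right (Ne.symm hga)]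
    rw [IsWalk, IsWalk, ha]
    exact and_congr_right fun haG => by rw [hE.head_eq haG, hE.tail_eq haG, ih hgl]

theorem isWalk_of_isWalk (hE : IsExtension G G' g) (h : G.IsWalk S l T) : G'.IsWalk S l T :=
  (hE.isWalk_iff fun hg => hE.fresh (h.mem_arrows hg)).mpr h

theorem exists_isWalk_tail (hE : IsExtension G G' g) (h : G'.IsWalk S l T) (hg : g ∈ l) :
    ∃ l₀, G.IsWalk S l₀ (G'.tail g) := by
  induction l generalizing T with
  | nil => simp at hg
  | cons a l ih =>
    by_cases hgl : g ∈ l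
    · exact ih h.2.2 hgl
    · obtain rfl := (List.mem_cons.mp hg).resolve_right hgl
      exact ⟨l, (hE.isWalk_iff hgl).mp h.2.2⟩

theorem exists_isWalk_head (hE : IsExtension G G' g) (h : G'.IsWalk S l T) (hg : g ∈ l) :
    ∃ l₀, G.IsWalk (G'.head g) l₀ T := by
  obtain ⟨l₀, h₀⟩ := hE.op.exists_isWalk_tail (isWalk_op.mpr h) (List.mem_reverse.mpr hg)
  exact ⟨l₀.reverse, isWalk_op.mp (by rwa [List.reverse_reverse])⟩

theorem linked_iff (hE : IsExtension G G' g) (htail : G.IsSink (G'.tail g))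
    (hhead : G.IsSource (G'.head g)) :
    G'.Linked S T ↔ S ≠ G'.head g ∧ T ≠ G'.tail g ∧
      (G.Linked S T ∨ G.Linked S (G'.tail g) ∧ G.Linked (G'.head g) T) := by
  constructor
  · rintro ⟨l, h⟩
    obtain ⟨hS, hSG⟩ := hE.isSource_iff.mp h.isSource
    obtain ⟨hT, hTG⟩ := hE.isSink_iff.mp h.isSink
    refine ⟨hS, hT, ?_⟩
    by_cases hg : g ∈ l
    · obtain ⟨l₁, h₁⟩ := hE.exists_isWalk_tail h.isWalk hg
      obtain ⟨l₂, h₂⟩ := hE.exists_isWalk_head h.isWalk hg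
      exact .inr ⟨⟨l₁, h₁, hSG, htail⟩, ⟨l₂, h₂, hhead, hTG⟩⟩
    · exact .inl ⟨l, (hE.isWalk_iff hg).mp h.isWalk, hSG, hTG⟩
  · rintro ⟨hS, hT, ⟨l, h⟩ | ⟨⟨l₁, h₁⟩, ⟨l₂, h₂⟩⟩⟩
    · exact ⟨l, hE.isWalk_of_isWalk h.isWalk, hE.isSource_iff.mpr ⟨hS, h.isSource⟩,
        hE.isSink_iff.mpr ⟨hT, h.isSink⟩⟩
    · have hwalk : G'.IsWalk S (l₂ ++ g :: l₁) T := isWalk_append.mpr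
        ⟨G'.head g, ⟨hE.mem_new, rfl, hE.isWalk_of_isWalk h₁.isWalk⟩, hE.isWalk_of_isWalk h₂.isWalk⟩
      exact ⟨_, hwalk, hE.isSource_iff.mpr ⟨hS, h₁.isSource⟩, hE.isSink_iff.mpr ⟨hT, h₂.isSink⟩⟩

theorem isMaxWalk_iff_of_closing (hE : IsExtension G G' g) (hG : G.IsThin)
    (h₀ : G.IsMaxWalk (G'.head g) l' (G'.tail g)) :
    G'.IsMaxWalk S l T ↔ G.IsMaxWalk S l T ∧ S ≠ G'.head g := by
  constructor
  · intro h
    obtain ⟨hS, hSG⟩ := hE.isSource_iff.mp h.isSource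
    have hg : g ∉ l := fun hg => by
      obtain ⟨l₁, h₁⟩ := hE.exists_isWalk_tail h.isWalk hg
      exact hS (hG.source_unique ⟨h₁, hSG, h₀.isSink⟩ h₀)
    exact ⟨⟨(hE.isWalk_iff hg).mp h.isWalk, hSG, (hE.isSink_iff.mp h.isSink).2⟩, hS⟩
  · rintro ⟨h, hS⟩
    have hT : T ≠ G'.tail g := by
      rintro rfl
      exact hS (hG.source_unique h h₀)
    exact ⟨hE.isWalk_of_isWalk h.isWalk, hE.isSource_iff.mpr ⟨hS, h.isSource⟩,
      hE.isSink_iff.mpr ⟨hT, h.isSink⟩⟩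

theorem isWalk_closing (hE : IsExtension G G' g) (h₀ : G.IsWalk (G'.head g) l (G'.tail g)) :
    G'.IsWalk (G'.head g) (g :: l) (G'.head g) :=
  ⟨hE.mem_new, rfl, hE.isWalk_of_isWalk h₀⟩

theorem cyclicArrows_of_closing (hE : IsExtension G G' g) (hG : G.IsThin)
    (h₀ : G.IsMaxWalk (G'.head g) l (G'.tail g)) :
    G'.cyclicArrows = G.cyclicArrows ∪ {a | a ∈ g :: l} := by
  ext a
  constructor
  · rintro ⟨haG', ha⟩
    by_cases hal : a ∈ g :: l
    · exact .inr hal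
    obtain ⟨hag, hal⟩ := not_or.mp (List.mem_cons.not.mp hal)
    refine .inl ⟨(hE.arrows_eq ▸ haG' : a ∈ insert g G.arrows).resolve_left hag, ?_⟩
    intro S l₁ T h haS
    refine ha S l₁ T ((hE.isMaxWalk_iff_of_closing hG h₀).mpr ⟨h, ?_⟩) haS
    rintro rfl
    obtain rfl := hG.sink_unique h h₀
    obtain rfl := (hG.eq_of_isWalk_to h.isSource h₀.isSource h.isWalk h₀.isWalk).2
    exact hal haS
  · rintro (⟨haG, ha⟩ | ha)
    · exact ⟨hE.mem_of_mem haG, fun S l₁ T h =>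
        ha S l₁ T ((hE.isMaxWalk_iff_of_closing hG h₀).mp h).1⟩
    · refine ⟨(hE.isWalk_closing h₀.isWalk).mem_arrows ha, fun S l₁ T h ha₁ => ?_⟩
      obtain ⟨h, hS⟩ := (hE.isMaxWalk_iff_of_closing hG h₀).mp h
      obtain rfl | hal := List.mem_cons.mp ha
      · exact hE.fresh (h.isWalk.mem_arrows ha₁)
      · exact hS (hG.source_unique_of_mem h h₀ ha₁ hal)

end IsExtension

end ArrowGraph

/-! ### Antipaths and paths as walks -/

section Threads

variable {Q : QuivRel} {st : SigmaTau Q} {S T S' T' : ℕ × ℤ} {l : List ℕ} {a b : ℕ}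
  {w w' : Thread}

/-- A quiver with relations in the plain sense: arrows join vertices, and relations are paths of
length two. -/
structure WellFormed (Q : QuivRel) : Prop where
  src_mem : ∀ a ∈ Q.A, Q.src a ∈ Q.V
  tgt_mem : ∀ a ∈ Q.A, Q.tgt a ∈ Q.V
  rel_path : ∀ ρ ∈ Q.rel, ρ.1 ∈ Q.A ∧ ρ.2 ∈ Q.A ∧ Q.src ρ.1 = Q.tgt ρ.2

/-- The pairs `(x, ε)` of a vertex and a sign. They index the trivial paths and antipaths, and serve
as endpoints: an antipath `ω` runs from `(sω, σω)` to `(tω, τω)`, a path from `(sω, σω)` to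
`(tω, -τω)`. -/
def signedVertices (Q : QuivRel) : Set (ℕ × ℤ) :=
  {S | S.1 ∈ Q.V ∧ (S.2 = 1 ∨ S.2 = -1)}

/-- The involution `(x, ε) ↦ (x, -ε)`. -/
def negSign (S : ℕ × ℤ) : ℕ × ℤ :=
  (S.1, -S.2)

/-- The graph on signed vertices whose walks are the antipaths. -/
def antipathGraph (st : SigmaTau Q) : ArrowGraph ℕ (ℕ × ℤ) where
  arrows := Q.A
  tail a := (Q.src a, st.σ a)
  head a := (Q.tgt a, st.τ a)

/-- The graph on signed vertices whose walks are the paths. -/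
def pathGraph (st : SigmaTau Q) : ArrowGraph ℕ (ℕ × ℤ) where
  arrows := Q.A
  tail a := (Q.src a, st.σ a)
  head a := negSign (Q.tgt a, st.τ a)

/-- The thread made up of the arrows of a walk starting at `S`. -/
def Thread.ofWalk (S : ℕ × ℤ) : List ℕ → Thread
  | [] => .triv S.1 S.2
  | a :: l => .arrows (a :: l)

/-- The arrows of a thread. -/
def Thread.arrowList : Thread → List ℕ
  | .triv _ _ => []
  | .arrows l => l

/-- `w` is a maximal antipath from `S` to `T`. -/
def IsMaxAntipath (st : SigmaTau Q) (w : Thread) (S T : ℕ × ℤ) : Prop :=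
  S ∈ signedVertices Q ∧ ∃ l, (antipathGraph st).IsMaxWalk S l T ∧ w = .ofWalk S l

theorem negSign_injective : Function.Injective negSign := fun _ _ h =>
  Prod.ext (congrArg Prod.fst h :) (neg_injective (congrArg Prod.snd h :))

theorem antipathGraph_isThin (st : SigmaTau Q) : (antipathGraph st).IsThin where
  tail_injOn a ha b hb hab := by
    by_contra hne
    have heq : st.σ a = st.σ b := congrArg Prod.snd hab
    have hneg : st.σ a = -st.σ b := st.σ_src a ha b hb hne (congrArg Prod.fst hab)
    have hpm := st.σ_pm b hb
    lia
  head_injOn a ha b hb hab := by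
    by_contra hne
    have heq : st.τ a = st.τ b := congrArg Prod.snd hab
    have hneg : st.τ a = -st.τ b := st.τ_tgt a ha b hb hne (congrArg Prod.fst hab)
    have hpm := st.τ_pm b hb
    lia

theorem pathGraph_isThin (st : SigmaTau Q) : (pathGraph st).IsThin where
  tail_injOn := (antipathGraph_isThin st).tail_injOn
  head_injOn := negSign_injective.comp_injOn (antipathGraph_isThin st).head_injOn

theorem isSource_pathGraph_iff :
    (pathGraph st).IsSource (negSign S) ↔ (antipathGraph st).IsSource S :=
  forall₂_congr fun _ _ => negSign_injective.ne_iff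

theorem Thread.arrowList_ofWalk (S : ℕ × ℤ) (l : List ℕ) : (ofWalk S l).arrowList = l := by
  cases l <;> rfl

theorem Thread.source_sigma_ofWalk {G : ArrowGraph ℕ (ℕ × ℤ)}
    (hG : ∀ a, G.tail a = (Q.src a, st.σ a)) (h : G.IsWalk S l T) :
    ((ofWalk S l).source Q, (ofWalk S l).sigma st) = S := by
  cases l with
  | nil => rfl
  | cons a l => exact (hG _).symm.trans (h.tail_getLast (List.cons_ne_nil a l))

theorem Thread.target_tauAnti_ofWalk (h : (antipathGraph st).IsWalk S l T) :
    ((ofWalk S l).target Q, (ofWalk S l).tauAnti st) = T := by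
  cases l with
  | nil => exact h
  | cons a l => exact h.2.1

theorem Thread.target_tauPath_ofWalk (h : (pathGraph st).IsWalk S l T) :
    negSign ((ofWalk S l).target Q, (ofWalk S l).tauPath st) = T := by
  cases l with
  | nil => exact Prod.ext (congrArg Prod.fst h :) ((neg_neg _).trans (congrArg Prod.snd h :))
  | cons a l => exact h.2.1

theorem exists_triv_eq_ofWalk_iff {G : ArrowGraph ℕ (ℕ × ℤ)} {x : ℕ} {ε : ℤ} :
    (∃ S T, S ∈ signedVertices Q ∧ ∃ l, G.IsWalk S l T ∧ Thread.triv x ε = .ofWalk S l) ↔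
      x ∈ Q.V ∧ (ε = 1 ∨ ε = -1) := by
  constructor
  · rintro ⟨S, T, hS, _ | ⟨a, l⟩, -, h⟩
    · obtain ⟨rfl, rfl⟩ := Thread.triv.inj h
      exact hS
    · cases h
  · exact fun h => ⟨(x, ε), (x, ε), h, [], rfl, rfl⟩

theorem exists_arrows_eq_ofWalk_iff {G : ArrowGraph ℕ (ℕ × ℤ)}
    (hG : ∀ a ∈ G.arrows, G.tail a ∈ signedVertices Q) :
    (∃ S T, S ∈ signedVertices Q ∧ ∃ l', G.IsWalk S l' T ∧ Thread.arrows l = .ofWalk S l') ↔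
      l ≠ [] ∧ (∀ a ∈ l, a ∈ G.arrows) ∧ l.IsChain (fun a b => G.tail a = G.head b) := by
  rw [← ArrowGraph.exists_isWalk_iff]
  constructor
  · rintro ⟨S, T, -, _ | ⟨a, l'⟩, h, hl⟩
    · cases hl
    · obtain rfl := Thread.arrows.inj hl
      exact ⟨List.cons_ne_nil a l', S, T, h⟩
  · rintro ⟨hl, S, T, h⟩
    refine ⟨S, T, h.tail_getLast hl ▸ hG _ (h.mem_arrows (List.getLast_mem hl)), l, h, ?_⟩
    cases l with
    | nil => contradiction
    | cons a l => rfl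

theorem exists_isMaxWalk_iff {G : ArrowGraph ℕ (ℕ × ℤ)} {finish : Thread → ℕ × ℤ}
    (hG : ∀ a, G.tail a = (Q.src a, st.σ a))
    (hfinish : ∀ {S l T}, G.IsWalk S l T → finish (.ofWalk S l) = T) :
    (∃ S T, S ∈ signedVertices Q ∧ ∃ l, G.IsMaxWalk S l T ∧ w = .ofWalk S l) ↔
      (∃ S T, S ∈ signedVertices Q ∧ ∃ l, G.IsWalk S l T ∧ w = .ofWalk S l) ∧
        G.IsSink (finish w) ∧ G.IsSource (w.source Q, w.sigma st) := by
  constructor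
  · rintro ⟨S, T, hS, l, h, rfl⟩
    rw [hfinish h.isWalk, Thread.source_sigma_ofWalk hG h.isWalk]
    exact ⟨⟨S, T, hS, l, h.isWalk, rfl⟩, h.isSink, h.isSource⟩
  · rintro ⟨⟨S, T, hS, l, h, rfl⟩, hsink, hsource⟩
    rw [hfinish h] at hsink
    rw [Thread.source_sigma_ofWalk hG h] at hsource
    exact ⟨S, T, hS, l, ⟨h, hsource, hsink⟩, rfl⟩

theorem WellFormed.tail_mem (hQ : WellFormed Q) (ha : a ∈ Q.A) :
    (Q.src a, st.σ a) ∈ signedVertices Q :=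
  ⟨hQ.src_mem a ha, st.σ_pm a ha⟩

theorem antipathGraph_tail_eq_head_iff (hQ : WellFormed Q) (ha : a ∈ Q.A) (hb : b ∈ Q.A) :
    (antipathGraph st).tail a = (antipathGraph st).head b ↔ (a, b) ∈ Q.rel := by
  simp only [antipathGraph, Prod.mk.injEq]
  constructor
  · exact fun ⟨hv, hs⟩ => (st.rel_iff a ha b hb hv).mpr hs
  · intro h
    obtain ⟨-, -, hv⟩ := hQ.rel_path (a, b) h
    exact ⟨hv, (st.rel_iff a ha b hb hv).mp h⟩

theorem pathGraph_tail_eq_head_iff (ha : a ∈ Q.A) (hb : b ∈ Q.A) :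
    (pathGraph st).tail a = (pathGraph st).head b ↔ Q.src a = Q.tgt b ∧ (a, b) ∉ Q.rel := by
  simp only [pathGraph, negSign, Prod.mk.injEq, and_congr_right_iff]
  intro hv
  have hrel := st.rel_iff a ha b hb hv
  have hσ := st.σ_pm a ha
  have hτ := st.τ_pm b hb
  grind

theorem isChain_and_iff {α : Type*} {R R' : α → α → Prop} {l : List α} :
    l.IsChain (fun a b => R a b ∧ R' a b) ↔ l.IsChain R ∧ l.IsChain R' := by
  simp only [List.isChain_iff_getElem, forall_and]

theorem isAntiThread_iff (hQ : WellFormed Q) : IsAntiThread Q w ↔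
    ∃ S T, S ∈ signedVertices Q ∧ ∃ l, (antipathGraph st).IsWalk S l T ∧ w = .ofWalk S l := by
  cases w with
  | triv x ε => exact exists_triv_eq_ofWalk_iff.symm
  | arrows l =>
    rw [exists_arrows_eq_ofWalk_iff fun a ha => hQ.tail_mem ha]
    exact and_congr_right' <| and_congr_right fun hA => List.IsChain.iff_of_mem_imp fun a b ha hb =>
      (antipathGraph_tail_eq_head_iff hQ (hA a ha) (hA b hb)).symm

theorem isPathThread_iff (hQ : WellFormed Q) : IsPathThread Q w ↔
    ∃ S T, S ∈ signedVertices Q ∧ ∃ l, (pathGraph st).IsWalk S l T ∧ w = .ofWalk S l := by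
  cases w with
  | triv x ε => exact exists_triv_eq_ofWalk_iff.symm
  | arrows l =>
    rw [exists_arrows_eq_ofWalk_iff fun a ha => hQ.tail_mem ha]
    have isChain_iff (hA : ∀ a ∈ l, a ∈ Q.A) := (List.IsChain.iff_of_mem_imp (l := l)
      fun a b ha hb => pathGraph_tail_eq_head_iff (st := st) (hA a ha) (hA b hb)).trans
        isChain_and_iff
    exact ⟨fun ⟨⟨hl, hA, hv⟩, hrel⟩ => ⟨hl, hA, (isChain_iff hA).mpr ⟨hv, hrel⟩⟩,
      fun ⟨hl, hA, h⟩ => ⟨⟨hl, hA, ((isChain_iff hA).mp h).1⟩, ((isChain_iff hA).mp h).2⟩⟩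

theorem inN_iff (hQ : WellFormed Q) : InN Q st w ↔ ∃ S T, IsMaxAntipath st w S T := by
  have isSink_iff : (antipathGraph st).IsSink (w.target Q, w.tauAnti st) ↔
      ¬∃ a ∈ Q.A, Q.src a = w.target Q ∧ st.σ a = w.tauAnti st := by
    simp [ArrowGraph.IsSink, antipathGraph]
  have isSource_iff : (antipathGraph st).IsSource (w.source Q, w.sigma st) ↔
      ¬∃ b ∈ Q.A, Q.tgt b = w.source Q ∧ st.τ b = w.sigma st := by
    simp [ArrowGraph.IsSource, antipathGraph]
  unfold IsMaxAntipath
  rw [exists_isMaxWalk_iff (finish := fun w => (w.target Q, w.tauAnti st)) (fun _ => rfl)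
    Thread.target_tauAnti_ofWalk, isSink_iff, isSource_iff, ← isAntiThread_iff hQ, InN]

theorem inM_iff (hQ : WellFormed Q) : InM Q st w ↔
    ∃ S T, S ∈ signedVertices Q ∧ ∃ l, (pathGraph st).IsMaxWalk S l T ∧ w = .ofWalk S l := by
  have isSink_iff : (pathGraph st).IsSink (negSign (w.target Q, w.tauPath st)) ↔
      ¬∃ a ∈ Q.A, Q.src a = w.target Q ∧ st.σ a = -w.tauPath st := by
    simp [ArrowGraph.IsSink, pathGraph, negSign]
  have isSource_iff : (pathGraph st).IsSource (w.source Q, w.sigma st) ↔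
      ¬∃ b ∈ Q.A, Q.tgt b = w.source Q ∧ st.τ b = -w.sigma st := by
    simp [ArrowGraph.IsSource, pathGraph, negSign, neg_eq_iff_eq_neg]
  rw [exists_isMaxWalk_iff (finish := fun w => negSign (w.target Q, w.tauPath st)) (fun _ => rfl)
    Thread.target_tauPath_ofWalk, isSink_iff, isSource_iff, ← isPathThread_iff hQ, InM]

namespace IsMaxAntipath

theorem source_sigma (h : IsMaxAntipath st w S T) : (w.source Q, w.sigma st) = S := by
  obtain ⟨-, l, h, rfl⟩ := h
  exact Thread.source_sigma_ofWalk (fun _ => rfl) h.isWalk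

theorem target_tauAnti (h : IsMaxAntipath st w S T) : (w.target Q, w.tauAnti st) = T := by
  obtain ⟨-, l, h, rfl⟩ := h
  exact Thread.target_tauAnti_ofWalk h.isWalk

theorem eq_iff_target (h : IsMaxAntipath st w S T) (h' : IsMaxAntipath st w' S' T') :
    w = w' ↔ T = T' := by
  constructor
  · rintro rfl
    exact h.target_tauAnti.symm.trans h'.target_tauAnti
  · rintro rfl
    obtain ⟨-, l, h, rfl⟩ := h
    obtain ⟨-, l', h', rfl⟩ := h'
    obtain ⟨rfl, rfl⟩ := (antipathGraph_isThin st).eq_of_isWalk_to h.isSource h'.isSource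
      h.isWalk h'.isWalk
    rfl

theorem eq_iff_source (h : IsMaxAntipath st w S T) (h' : IsMaxAntipath st w' S' T') :
    w = w' ↔ S = S' := by
  constructor
  · rintro rfl
    exact h.source_sigma.symm.trans h'.source_sigma
  · rintro rfl
    have ⟨_, _, hl, _⟩ := h
    have ⟨_, _, hl', _⟩ := h'
    exact (h.eq_iff_target h').mpr ((antipathGraph_isThin st).sink_unique hl hl')

end IsMaxAntipath

theorem phiRel_iff_linked (hQ : WellFormed Q) (h : IsMaxAntipath st w S T)
    (h' : IsMaxAntipath st w' S' T') :
    PhiRel Q st w w' ↔ (pathGraph st).Linked (negSign S) T' := by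
  obtain rfl := h.source_sigma
  obtain rfl := h'.target_tauAnti
  constructor
  · rintro ⟨-, -, m, hm, hsource, hsigma, htarget, htau⟩
    obtain ⟨U, V, -, l, hl, rfl⟩ := (inM_iff hQ).mp hm
    have hU := Thread.source_sigma_ofWalk (st := st) (fun _ => rfl) hl.isWalk
    have hV := Thread.target_tauPath_ofWalk hl.isWalk
    rw [hsource, hsigma] at hU
    rw [negSign, ← htarget, ← htau] at hV
    subst hU hV
    exact ⟨l, hl⟩
  · rintro ⟨l, hl⟩
    have hmem : negSign (w.source Q, w.sigma st) ∈ signedVertices Q :=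
      ⟨h.1.1, h.1.2.symm.imp neg_eq_iff_eq_neg.mpr (congrArg Neg.neg)⟩
    obtain ⟨hsource, hsigma⟩ := Prod.mk.inj <|
      Thread.source_sigma_ofWalk (st := st) (fun _ => rfl) hl.isWalk
    obtain ⟨htarget, htau⟩ := Prod.mk.inj <| Thread.target_tauPath_ofWalk hl.isWalk
    exact ⟨(inN_iff hQ).mpr ⟨_, T, h⟩, (inN_iff hQ).mpr ⟨S', _, h'⟩, _,
      (inM_iff hQ).mpr ⟨_, _, hmem, l, hl, rfl⟩, hsource, hsigma, htarget.symm, htau.symm⟩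

theorem phiRel_biUnique (hQ : WellFormed Q) : Relator.BiUnique (PhiRel Q st) := by
  constructor
  · intro w₁ w₂ w h₁ h₂
    obtain ⟨S₁, T₁, hw₁⟩ := (inN_iff hQ).mp h₁.1
    obtain ⟨S₂, T₂, hw₂⟩ := (inN_iff hQ).mp h₂.1
    obtain ⟨S, T, hw⟩ := (inN_iff hQ).mp h₁.2.1
    obtain ⟨l₁, hl₁⟩ := (phiRel_iff_linked hQ hw₁ hw).mp h₁
    obtain ⟨l₂, hl₂⟩ := (phiRel_iff_linked hQ hw₂ hw).mp h₂
    exact (hw₁.eq_iff_source hw₂).mpr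
      (negSign_injective ((pathGraph_isThin st).source_unique hl₁ hl₂))
  · intro w w₁ w₂ h₁ h₂
    obtain ⟨S, T, hw⟩ := (inN_iff hQ).mp h₁.1
    obtain ⟨S₁, T₁, hw₁⟩ := (inN_iff hQ).mp h₁.2.1
    obtain ⟨S₂, T₂, hw₂⟩ := (inN_iff hQ).mp h₂.2.1
    obtain ⟨l₁, hl₁⟩ := (phiRel_iff_linked hQ hw hw₁).mp h₁
    obtain ⟨l₂, hl₂⟩ := (phiRel_iff_linked hQ hw hw₂).mp h₂
    exact (hw₁.eq_iff_target hw₂).mpr ((pathGraph_isThin st).sink_unique hl₁ hl₂)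

theorem isMaxAntipath_arrows_iff (hQ : WellFormed Q) :
    IsMaxAntipath st (.arrows l) S T ↔ l ≠ [] ∧ (antipathGraph st).IsMaxWalk S l T := by
  constructor
  · rintro ⟨-, _ | ⟨a, l'⟩, h, hl⟩
    · cases hl
    · obtain rfl := Thread.arrows.inj hl
      exact ⟨List.cons_ne_nil a l', h⟩
  · rintro ⟨hl, h⟩
    have hS : S ∈ signedVertices Q := h.isWalk.tail_getLast hl ▸
      hQ.tail_mem (st := st) (h.isWalk.mem_arrows (List.getLast_mem hl))
    cases l with
    | nil => contradiction
    | cons a l => exact ⟨hS, a :: l, h, rfl⟩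

theorem inC_iff (hQ : WellFormed Q) : InC Q st a ↔ a ∈ (antipathGraph st).cyclicArrows := by
  simp only [InC, inN_iff hQ, isMaxAntipath_arrows_iff hQ, not_exists, not_and]
  refine and_congr_right' ⟨fun h S l T hl ha => ?_, fun h l ⟨S, T, _, hl⟩ => h S l T hl⟩
  exact h l ⟨S, T, List.ne_nil_of_mem ha, hl⟩ ha

end Threads

/-! ### Closing up a maximal antipath -/

section Closing

variable {Q Q' : QuivRel} {st : SigmaTau Q} {st' : SigmaTau Q'} {r w w' : Thread} {g a b : ℕ}
  {S T S' T' : ℕ × ℤ}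

/-- `Q'` is `Q` with one new arrow `g` leading from the end of the maximal antipath `r` back to its
start, bound by relations to the last and to the first arrow of `r`. Completing an isolated relation
is the case in which `r` has length two. -/
structure IsClosing (st : SigmaTau Q) (st' : SigmaTau Q') (r : Thread) (g : ℕ) : Prop where
  V_eq : Q'.V = Q.V
  A_eq : Q'.A = insert g Q.A
  fresh : g ∉ Q.A
  src_eq : ∀ a ∈ Q.A, Q'.src a = Q.src a
  tgt_eq : ∀ a ∈ Q.A, Q'.tgt a = Q.tgt a
  σ_eq : ∀ a ∈ Q.A, st'.σ a = st.σ a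
  τ_eq : ∀ a ∈ Q.A, st'.τ a = st.τ a
  isMaxAntipath : IsMaxAntipath st r (Q'.tgt g, st'.τ g) (Q'.src g, st'.σ g)

namespace IsClosing

theorem isExtension_antipathGraph (h : IsClosing st st' r g) :
    (antipathGraph st).IsExtension (antipathGraph st') g where
  fresh := h.fresh
  arrows_eq := by simp only [antipathGraph, h.A_eq, Finset.coe_insert]
  tail_eq a ha := Prod.ext (h.src_eq a ha) (h.σ_eq a ha)
  head_eq a ha := Prod.ext (h.tgt_eq a ha) (h.τ_eq a ha)

theorem isExtension_pathGraph (h : IsClosing st st' r g) :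
    (pathGraph st).IsExtension (pathGraph st') g where
  fresh := h.fresh
  arrows_eq := h.isExtension_antipathGraph.arrows_eq
  tail_eq := h.isExtension_antipathGraph.tail_eq
  head_eq _ ha := congrArg negSign (h.isExtension_antipathGraph.head_eq ha)

theorem isMaxWalk (h : IsClosing st st' r g) : (antipathGraph st).IsMaxWalk
    ((antipathGraph st').head g) r.arrowList ((antipathGraph st').tail g) := by
  obtain ⟨-, l, hl, hr⟩ := h.isMaxAntipath
  rwa [hr, Thread.arrowList_ofWalk]

theorem isMaxAntipath_iff (h : IsClosing st st' r g) :
    IsMaxAntipath st' w S T ↔ IsMaxAntipath st w S T ∧ w ≠ r := by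
  have isMaxWalk_iff (l : List ℕ) : (antipathGraph st').IsMaxWalk S l T ↔
      (antipathGraph st).IsMaxWalk S l T ∧ S ≠ (antipathGraph st').head g :=
    h.isExtension_antipathGraph.isMaxWalk_iff_of_closing (antipathGraph_isThin st) h.isMaxWalk
  have ne_iff (hw : IsMaxAntipath st w S T) : w ≠ r ↔ S ≠ (antipathGraph st').head g :=
    (hw.eq_iff_source h.isMaxAntipath).not
  have signedVertices_eq : signedVertices Q' = signedVertices Q := by
    simp only [signedVertices, h.V_eq]
  constructor
  · rintro ⟨hS, l, hl, hw⟩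
    obtain ⟨hl, hne⟩ := (isMaxWalk_iff l).mp hl
    have hwQ : IsMaxAntipath st w S T := ⟨signedVertices_eq ▸ hS, l, hl, hw⟩
    exact ⟨hwQ, (ne_iff hwQ).mpr hne⟩
  · rintro ⟨hwQ, hwr⟩
    have ⟨hS, l, hl, hw⟩ := hwQ
    exact ⟨signedVertices_eq ▸ hS, l, (isMaxWalk_iff l).mpr ⟨hl, (ne_iff hwQ).mp hwr⟩, hw⟩

theorem inN_iff (h : IsClosing st st' r g) (hQ : WellFormed Q) (hQ' : WellFormed Q') :
    InN Q' st' w ↔ InN Q st w ∧ w ≠ r := by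
  simp only [GentleQuiv.inN_iff hQ, GentleQuiv.inN_iff hQ', h.isMaxAntipath_iff,
    exists_and_right]

theorem phiRel_iff (h : IsClosing st st' r g) (hQ : WellFormed Q) (hQ' : WellFormed Q')
    (hw : IsMaxAntipath st w S T) (hw' : IsMaxAntipath st w' S' T') (hwr : w ≠ r) (hwr' : w' ≠ r) :
    PhiRel Q' st' w w' ↔ PhiRel Q st w w' ∨ PhiRel Q st w r ∧ PhiRel Q st r w' := by
  have hsink : (pathGraph st).IsSink ((pathGraph st').tail g) := h.isMaxWalk.isSink
  have hsource : (pathGraph st).IsSource ((pathGraph st').head g) :=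
    isSource_pathGraph_iff.mpr h.isMaxWalk.isSource
  have hS : negSign S ≠ (pathGraph st').head g :=
    negSign_injective.ne ((hw.eq_iff_source h.isMaxAntipath).not.mp hwr)
  have hT' : T' ≠ (pathGraph st').tail g := (hw'.eq_iff_target h.isMaxAntipath).not.mp hwr'
  rw [phiRel_iff_linked hQ' (h.isMaxAntipath_iff.mpr ⟨hw, hwr⟩)
      (h.isMaxAntipath_iff.mpr ⟨hw', hwr'⟩), h.isExtension_pathGraph.linked_iff hsink hsource,
    phiRel_iff_linked hQ hw hw', phiRel_iff_linked hQ hw h.isMaxAntipath,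
    phiRel_iff_linked hQ h.isMaxAntipath hw', and_iff_right hS, and_iff_right hT']
  rfl

theorem phiRel_eq_bypass (h : IsClosing st st' r g) (hQ : WellFormed Q) (hQ' : WellFormed Q') :
    PhiRel Q' st' = bypass (PhiRel Q st) r := by
  suffices ∀ w w', InN Q st w → InN Q st w' → w ≠ r → w' ≠ r → (PhiRel Q' st' w w' ↔
      PhiRel Q st w w' ∨ PhiRel Q st w r ∧ PhiRel Q st r w') by
    ext w w'
    constructor
    · intro hΦ
      obtain ⟨hw, hwr⟩ := (h.inN_iff hQ hQ').mp hΦ.1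
      obtain ⟨hw', hwr'⟩ := (h.inN_iff hQ hQ').mp hΦ.2.1
      exact ⟨hwr, hwr', (this w w' hw hw' hwr hwr').mp hΦ⟩
    · rintro ⟨hwr, hwr', hΦ⟩
      exact (this w w' (hΦ.elim (·.1) (·.1.1)) (hΦ.elim (·.2.1) (·.2.2.1)) hwr hwr').mpr hΦ
  intro w w' hw hw'
  obtain ⟨S, T, hw⟩ := (GentleQuiv.inN_iff hQ).mp hw
  obtain ⟨S', T', hw'⟩ := (GentleQuiv.inN_iff hQ).mp hw'
  exact h.phiRel_iff hQ hQ' hw hw'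

theorem setOf_inN (h : IsClosing st st' r g) (hQ : WellFormed Q) (hQ' : WellFormed Q') :
    {w | InN Q' st' w} = {w | InN Q st w} \ {r} :=
  Set.ext fun _ => h.inN_iff hQ hQ'

theorem setOf_nOrbit (h : IsClosing st st' r g) (hQ : WellFormed Q) (hQ' : WellFormed Q')
    (hr : orbit (PhiRel Q st) r ≠ {r}) :
    {O | NOrbit Q' st' O} =
      {O | NOrbit Q st O ∧ O ≠ orbit (PhiRel Q st) r} ∪ {orbit (PhiRel Q st) r \ {r}} := by
  have hrN : r ∈ {w | InN Q st w} := (GentleQuiv.inN_iff hQ).mpr ⟨_, _, h.isMaxAntipath⟩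
  change orbits {w | InN Q' st' w} (PhiRel Q' st') = _
  rw [h.setOf_inN hQ hQ', h.phiRel_eq_bypass hQ hQ']
  exact orbits_bypass (phiRel_biUnique hQ) (fun _ _ hΦ => ⟨hΦ.1, hΦ.2.1⟩) hrN hr

theorem setOf_inC (h : IsClosing st st' r g) (hQ : WellFormed Q) (hQ' : WellFormed Q') :
    {a | InC Q' st' a} = {a | InC Q st a} ∪ {a | a ∈ g :: r.arrowList} := by
  simp only [inC_iff hQ, inC_iff hQ', Set.ofPred_mem_eq]
  exact h.isExtension_antipathGraph.cyclicArrows_of_closing (antipathGraph_isThin st) h.isMaxWalk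

theorem disjoint_setOf_inC (h : IsClosing st st' r g) (hQ : WellFormed Q) :
    Disjoint {a | InC Q st a} {a | a ∈ g :: r.arrowList} := by
  refine Set.disjoint_left.mpr fun a haC ha => ?_
  obtain ⟨haQ, ha'⟩ := (inC_iff hQ).mp haC
  obtain rfl | ha := List.mem_cons.mp ha
  · exact h.fresh haQ
  · exact ha' _ _ _ h.isMaxWalk ha

theorem psiRel_iff (h : IsClosing st st' r g) (hQ : WellFormed Q) (hQ' : WellFormed Q') :
    PsiRel Q st a b ↔ a ∉ g :: r.arrowList ∧ b ∉ g :: r.arrowList ∧ PsiRel Q' st' a b := by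
  have inC_iff (c : ℕ) : InC Q st c ↔ c ∉ g :: r.arrowList ∧ InC Q' st' c := by
    have hunion : InC Q' st' c ↔ InC Q st c ∨ c ∈ g :: r.arrowList :=
      Set.ext_iff.mp (h.setOf_inC hQ hQ') c
    have hdisj : InC Q st c → c ∉ g :: r.arrowList :=
      fun hc => Set.disjoint_left.mp (h.disjoint_setOf_inC hQ) hc
    tauto
  have comp_iff (ha : a ∈ Q.A) (hb : b ∈ Q.A) : (Q.tgt b = Q.src a ∧ st.τ b = st.σ a) ↔
      Q'.tgt b = Q'.src a ∧ st'.τ b = st'.σ a := by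
    rw [h.tgt_eq b hb, h.src_eq a ha, h.τ_eq b hb, h.σ_eq a ha]
  constructor
  · rintro ⟨ha, hb, hab⟩
    obtain ⟨ha', haC⟩ := (inC_iff a).mp ha
    obtain ⟨hb', hbC⟩ := (inC_iff b).mp hb
    exact ⟨ha', hb', haC, hbC, (comp_iff ha.1 hb.1).mp hab⟩
  · rintro ⟨ha', hb', haC, hbC, hab⟩
    have ha := (inC_iff a).mpr ⟨ha', haC⟩
    have hb := (inC_iff b).mpr ⟨hb', hbC⟩
    exact ⟨ha, hb, (comp_iff ha.1 hb.1).mpr hab⟩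

theorem setOf_cOrbit (h : IsClosing st st' r g) (hQ : WellFormed Q) (hQ' : WellFormed Q') :
    {O | COrbit Q' st' O} = {O | COrbit Q st O} ∪ {{a | a ∈ g :: r.arrowList}} := by
  have hclosed := h.isExtension_antipathGraph.isWalk_closing h.isMaxWalk.isWalk
  have inC_of_mem {a : ℕ} (ha : a ∈ g :: r.arrowList) : InC Q' st' a :=
    (Set.ext_iff.mp (h.setOf_inC hQ hQ') a).mpr (.inr ha)
  change orbits {a | InC Q' st' a} (PsiRel Q' st') = _
  rw [h.setOf_inC hQ hQ']
  refine orbits_union (h.disjoint_setOf_inC hQ) ?_ (fun _ _ => h.psiRel_iff hQ hQ')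
    ⟨g, List.mem_cons_self⟩ ?_
  · rintro a b ⟨ha, hb, htgt, hτ⟩
    exact (antipathGraph_isThin st').mem_closed_walk_iff hclosed ha.1 hb.1 (Prod.ext htgt hτ)
  · intro a ha b hb
    refine hclosed.eqvGen (fun c hc d hd hdc => ?_) ha hb
    obtain ⟨htgt, hτ⟩ := Prod.mk.inj hdc
    exact ⟨inC_of_mem hc, inC_of_mem hd, htgt, hτ⟩

end IsClosing

end Closing

section Completion

variable {Q Q' : QuivRel} {st : SigmaTau Q} {st' : SigmaTau Q'} {ρ : ℕ × ℕ} {γ : ℕ × ℕ → ℕ}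

theorem IsGentle.wellFormed (hQ : IsGentle Q) : WellFormed Q where
  src_mem a ha := (hQ.2.1 a ha).1
  tgt_mem a ha := (hQ.2.1 a ha).2
  rel_path := hQ.2.2.2.1

namespace IsCompletion

theorem A_eq_insert (hc : IsCompletion Q {ρ} γ Q') : Q'.A = insert (γ ρ) Q.A := by
  rw [hc.A_eq, Finset.image_singleton, Finset.union_singleton]

theorem mem_rel_iff {q : ℕ × ℕ} (hc : IsCompletion Q {ρ} γ Q') :
    q ∈ Q'.rel ↔ q ∈ Q.rel ∨ q = (γ ρ, ρ.1) ∨ q = (ρ.2, γ ρ) := by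
  simp only [hc.rel_eq, Finset.image_singleton, Finset.mem_union, Finset.mem_singleton, or_assoc]

theorem wellFormed (hc : IsCompletion Q {ρ} γ Q') (hQ : WellFormed Q) : WellFormed Q' := by
  have hρ := Finset.mem_singleton_self ρ
  obtain ⟨h₁, h₂, -⟩ := hQ.rel_path ρ (hc.subset hρ)
  constructor
  · rw [hc.A_eq_insert, hc.V_eq, Finset.forall_mem_insert, hc.src_new ρ hρ]
    exact ⟨hQ.tgt_mem _ h₁, fun a ha => hc.src_old a ha ▸ hQ.src_mem a ha⟩
  · rw [hc.A_eq_insert, hc.V_eq, Finset.forall_mem_insert, hc.tgt_new ρ hρ]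
    exact ⟨hQ.src_mem _ h₂, fun a ha => hc.tgt_old a ha ▸ hQ.tgt_mem a ha⟩
  · intro q hq
    rw [hc.A_eq_insert, Finset.mem_insert, Finset.mem_insert]
    obtain hq | rfl | rfl := hc.mem_rel_iff.mp hq
    · obtain ⟨hq₁, hq₂, h⟩ := hQ.rel_path q hq
      exact ⟨.inr hq₁, .inr hq₂, by rw [hc.src_old _ hq₁, hc.tgt_old _ hq₂, h]⟩
    · exact ⟨.inl rfl, .inr h₁, by rw [hc.src_new ρ hρ, hc.tgt_old _ h₁]⟩
    · exact ⟨.inr h₂, .inl rfl, by rw [hc.tgt_new ρ hρ, hc.src_old _ h₂]⟩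

theorem σ_new (hc : IsCompletion Q {ρ} γ Q') (hQ : WellFormed Q) : st'.σ (γ ρ) = st'.τ ρ.1 := by
  have hrel : (γ ρ, ρ.1) ∈ Q'.rel := hc.mem_rel_iff.mpr (.inr (.inl rfl))
  obtain ⟨hγ, h₁, hv⟩ := (hc.wellFormed hQ).rel_path _ hrel
  exact (st'.rel_iff _ hγ _ h₁ hv).mp hrel

theorem τ_new (hc : IsCompletion Q {ρ} γ Q') (hQ : WellFormed Q) : st'.τ (γ ρ) = st'.σ ρ.2 := by
  have hrel : (ρ.2, γ ρ) ∈ Q'.rel := hc.mem_rel_iff.mpr (.inr (.inr rfl))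
  obtain ⟨h₂, hγ, hv⟩ := (hc.wellFormed hQ).rel_path _ hrel
  exact ((st'.rel_iff _ h₂ _ hγ hv).mp hrel).symm

theorem isClosing (hc : IsCompletion Q {ρ} γ Q') (hQ : WellFormed Q) (hiso : Isolated Q st ρ)
    (hst : ∀ a ∈ Q.A, st'.σ a = st.σ a ∧ st'.τ a = st.τ a) :
    IsClosing st st' (.arrows [ρ.1, ρ.2]) (γ ρ) where
  V_eq := hc.V_eq
  A_eq := hc.A_eq_insert
  fresh := hc.fresh ρ (Finset.mem_singleton_self ρ)
  src_eq := hc.src_old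
  tgt_eq := hc.tgt_old
  σ_eq a ha := (hst a ha).1
  τ_eq a ha := (hst a ha).2
  isMaxAntipath := by
    have hρ := Finset.mem_singleton_self ρ
    obtain ⟨h₁, h₂, -⟩ := hQ.rel_path ρ hiso.1
    rw [hc.src_new ρ hρ, hc.tgt_new ρ hρ, hc.σ_new hQ, hc.τ_new hQ, (hst _ h₁).2, (hst _ h₂).1]
    obtain ⟨S, T, h⟩ := (inN_iff hQ).mp hiso.2
    obtain rfl := h.source_sigma
    obtain rfl := h.target_tauAnti
    exact h

end IsCompletion

theorem setOf_mem_triple_eq {α : Type*} (a b c : α) : {x | x ∈ [c, a, b]} = {a, b, c} := by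
  ext x
  simp only [List.mem_cons, List.not_mem_nil, or_false, Set.mem_ofPred_eq, Set.mem_insert_iff,
    Set.mem_singleton_iff]
  tauto

end Completion

theorem stmt5_general {Q Q' : QuivRel} (hQ : WellFormed Q) (hQ' : WellFormed Q') {st : SigmaTau Q}
    {st' : SigmaTau Q'} {r : Thread} {g : ℕ} (h : IsClosing st st' r g)
    (hr : orbit (PhiRel Q st) r ≠ {r}) :
    ({w | InN Q' st' w} = {w | InN Q st w} \ {r}) ∧
    ({O | NOrbit Q' st' O} =
      {O | NOrbit Q st O ∧ O ≠ orbit (PhiRel Q st) r} ∪ {orbit (PhiRel Q st) r \ {r}}) ∧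
    ({a | InC Q' st' a} = {a | InC Q st a} ∪ {a | a ∈ g :: r.arrowList}) ∧
    ({O | COrbit Q' st' O} = {O | COrbit Q st O} ∪ {{a | a ∈ g :: r.arrowList}}) :=
  ⟨h.setOf_inN hQ hQ', h.setOf_nOrbit hQ hQ' hr, h.setOf_inC hQ hQ', h.setOf_cOrbit hQ hQ'⟩

/-- Completing an isolated relation `ρ = (α, β)` whose
`Φ`-orbit is not `{ρ}` yields a gentle quiver `𝚫'` with
`𝒩_{𝚫'} = 𝒩_𝚫 ∖ {ρ}`,
`𝒩_{𝚫'}/ℤ = {𝒪 ∈ 𝒩_𝚫/ℤ ∣ 𝒪 ≠ ℤ·ρ} ∪ {(ℤ·ρ) ∖ {ρ}}`,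
`𝒞_{𝚫'} = 𝒞_𝚫 ∪ {α, β, γ_ρ}` and
`𝒞_{𝚫'}/ℤ = 𝒞_𝚫/ℤ ∪ {{α, β, γ_ρ}}` (for compatible choices of `σ, τ`). -/
theorem stmt5 (Q Q' : QuivRel) (hQ : IsGentle Q)
    (st : SigmaTau Q) (st' : SigmaTau Q')
    (hst : ∀ a ∈ Q.A, st'.σ a = st.σ a ∧ st'.τ a = st.τ a)
    (ρ : ℕ × ℕ) (hiso : Isolated Q st ρ) (γ : ℕ × ℕ → ℕ)
    (hc : IsCompletion Q {ρ} γ Q')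
    (hZ : {w : Thread | Relation.EqvGen (PhiRel Q st) (.arrows [ρ.1, ρ.2]) w} ≠
        {Thread.arrows [ρ.1, ρ.2]}) :
    ({w : Thread | InN Q' st' w} =
        {w : Thread | InN Q st w} \ {Thread.arrows [ρ.1, ρ.2]}) ∧
    ({O : Set Thread | NOrbit Q' st' O} =
        {O : Set Thread | NOrbit Q st O ∧
            O ≠ {w | Relation.EqvGen (PhiRel Q st) (.arrows [ρ.1, ρ.2]) w}} ∪
          {{w | Relation.EqvGen (PhiRel Q st) (.arrows [ρ.1, ρ.2]) w} \
              {Thread.arrows [ρ.1, ρ.2]}}) ∧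
    ({a : ℕ | InC Q' st' a} = {a : ℕ | InC Q st a} ∪ {ρ.1, ρ.2, γ ρ}) ∧
    ({O : Set ℕ | COrbit Q' st' O} =
        {O : Set ℕ | COrbit Q st O} ∪ {({ρ.1, ρ.2, γ ρ} : Set ℕ)}) := by
  rw [← setOf_mem_triple_eq ρ.1 ρ.2 (γ ρ)]
  exact stmt5_general hQ.wellFormed (hc.wellFormed hQ.wellFormed)
    (hc.isClosing hQ.wellFormed hiso hst) hZ

end GentleQuiv
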